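/- Let U ⊆ ℂ² be open, F : U → ℂ holomorphic with (∂F/∂x, ∂F/∂y) ≠ (0,0) at every point of U, ω = (P,Q) a holomorphic 1-form on U, and k ≥ 1. Then the following are equivalent: (a) there exists a Françoise sequence (g_i, r_i), 1 ≤ i ≤ k, for dF + εω; (b) there exist holomorphic functions G₁,…,G_k, R₁,…,R_k on U such that, with G = 1 + Σ_{i=1}^{k} ε^i G_i, A = G·(∂F/∂x + εP), B = G·(∂F/∂y + εQ), C = Σ_{i=1}^{k} ε^{i−1} R_i, and Ω = (A,B,C), the integrability coefficient ⟨Ω ∧ dΩ⟩ has identically vanishing coefficient of ε^n for every n ≤ k − 1. -/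

import Mathlib

/-- ∂/∂x of a function on ℂ². -/
noncomputable def pdx (f : ℂ × ℂ → ℂ) (p : ℂ × ℂ) : ℂ := fderiv ℂ f p (1, 0)

/-- ∂/∂y of a function on ℂ². -/
noncomputable def pdy (f : ℂ × ℂ → ℂ) (p : ℂ × ℂ) : ℂ := fderiv ℂ f p (0, 1)

/-- The integrability coefficient ⟨Ω ∧ dΩ⟩ of the 1-form Ω = A dx + B dy + C dε on
ℂ² × ℂ (coordinates (x,y,ε)), namely
A·(∂C/∂y − ∂B/∂ε) + B·(∂A/∂ε − ∂C/∂x) + C·(∂B/∂x − ∂A/∂y). -/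
noncomputable def intCoeff (A B C : ℂ × ℂ → ℂ → ℂ) (p : ℂ × ℂ) (ε : ℂ) : ℂ :=
  A p ε * (pdy (fun q => C q ε) p - deriv (fun e => B p e) ε) +
  B p ε * (deriv (fun e => A p e) ε - pdx (fun q => C q ε) p) +
  C p ε * (pdx (fun q => B q ε) p - pdy (fun q => A q ε) p)

/-!
Both kinds of sequences are truncations, in powers of `ε`, of an integrating factor `M` and a first
integral `N` of the deformation: `M (dF + εω) ≡ dN` modulo `ε ^ (k + 1)`, where `d` differentiates
in `x` and `y` only. Up to signs, a Françoise sequence lists the coefficients of `M` and `N`.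

For such a pair, `Ω = M (dF + εω) + N' dε` is congruent to the total differential of `N`, hence
integrable modulo `ε ^ k`. Conversely, let `Ω = G (dF + εω) + R dε` be integrable modulo `ε ^ k`,
and let `M (dF + εω) - dN = ε ^ (m + 1) α` and `M R - G N' = ε ^ m t` with `m < k`. Since `MΩ`
equals `G` times the total differential of `N` up to these errors, the coefficient of `ε ^ m` in
`M² ⟨Ω ∧ dΩ⟩ = 0` reads `dF ∧ (dt₀ - (m + 1) α₀) = 0`, so that `α₀ = g dF + dr` with
`r = t₀ / (m + 1)` by the de Rham division property of `dF`. Then `M - ε ^ (m + 1) g` and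
`N + ε ^ (m + 1) r` satisfy the same congruences one order higher.
-/

section Analysis

open Filter Topology Metric Set

variable {E F : Type*} [NormedAddCommGroup E] [NormedSpace ℂ E]
  [NormedAddCommGroup F] [NormedSpace ℂ F]

lemma norm_fderiv_le_of_forall_norm_le {f : E → F} {c : E} {R C : ℝ} (hR : 0 < R)
    (hf : DifferentiableOn ℂ f (ball c R)) (hC : ∀ x ∈ ball c R, ‖f x‖ ≤ C) :
    ‖fderiv ℂ f c‖ ≤ 2 * C / R := by
  refine Complex.norm_fderiv_le_div_of_mapsTo_ball hf (fun x hx => ?_) hR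
  rw [mem_closedBall, two_mul]
  exact (dist_le_norm_add_norm _ _).trans
    (add_le_add (hC x hx) (hC c (mem_ball_self hR)))

lemma uniformCauchySeqOn_fderiv {ι : Type*} {l : Filter ι} {f : ι → E → F} {U : Set E} {p : E}
    {ρ : ℝ} (hρ : 0 < ρ) (hU : ball p (2 * ρ) ⊆ U) (hf : ∀ᶠ n in l, DifferentiableOn ℂ (f n) U)
    (hc : UniformCauchySeqOn f l U) :
    UniformCauchySeqOn (fun n => fderiv ℂ (f n)) l (ball p ρ) := by
  intro u hu
  obtain ⟨ε, hε, hεu⟩ := mem_uniformity_dist.1 hu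
  filter_upwards [hc _ (dist_mem_uniformity (by positivity : 0 < ε * ρ / 3)), hf.prod_mk hf]
    with ⟨m, n⟩ hmn hd q hq
  have hqU : ball q ρ ⊆ U := (ball_subset_ball' (by rw [two_mul]; gcongr; exact hq.le)).trans hU
  have hdiff : ∀ x ∈ ball q ρ, ‖(f m - f n) x‖ ≤ ε * ρ / 3 := fun x hx => by
    rw [Pi.sub_apply, ← dist_eq_norm]
    exact (hmn x (hqU hx)).le
  have hnhds := ball_mem_nhds q hρ
  refine hεu ?_
  rw [dist_eq_norm, ← fderiv_sub ((hd.1.mono hqU).differentiableAt hnhds)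
    ((hd.2.mono hqU).differentiableAt hnhds)]
  calc ‖fderiv ℂ (f m - f n) q‖ ≤ 2 * (ε * ρ / 3) / ρ :=
        norm_fderiv_le_of_forall_norm_le hρ ((hd.1.mono hqU).sub (hd.2.mono hqU)) hdiff
    _ = 2 / 3 * ε := by field_simp
    _ < ε := by linarith

theorem exists_hasFDerivAt_of_tendstoUniformlyOn [CompleteSpace F] {ι : Type*} {l : Filter ι}
    [l.NeBot] {f : ι → E → F} {g : E → F} {U : Set E} {p : E} (hU : U ∈ 𝓝 p)
    (hf : ∀ᶠ n in l, DifferentiableOn ℂ (f n) U) (hfg : TendstoUniformlyOn f g l U) :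
    ∃ g', HasFDerivAt g g' p ∧ Tendsto (fun n => fderiv ℂ (f n) p) l (𝓝 g') := by
  obtain ⟨r, hr, hrU⟩ := Metric.mem_nhds_iff.1 hU
  obtain ⟨ρ, rfl⟩ : ∃ ρ, r = 2 * ρ := ⟨r / 2, by ring⟩
  have hρ : 0 < ρ := by linarith
  have hcauchy := uniformCauchySeqOn_fderiv hρ hrU hf hfg.uniformCauchySeqOn
  have hlim : ∀ q ∈ ball p ρ, ∃ L, Tendsto (fun n => fderiv ℂ (f n) q) l (𝓝 L) := fun q hq =>
    cauchy_map_iff_exists_tendsto.1 (hcauchy.cauchy_map hq)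
  choose! g' hg' using hlim
  have hunif := tendstoUniformlyOn_iff_tendstoUniformlyOnFilter.1
    (hcauchy.tendstoUniformlyOn_of_tendsto hg')
  refine ⟨g' p, hasFDerivAt_of_tendstoUniformlyOnFilter (f := f)
    (hunif.mono_right (le_principal_iff.2 (ball_mem_nhds p hρ))) ?_ ?_,
    hg' p (mem_ball_self hρ)⟩
  · filter_upwards [hf.prod_mk (eventually_mem_nhds_iff.2 hU)] with ⟨n, q⟩ ⟨hn, hq⟩
    exact (hn.differentiableAt hq).hasFDerivAt
  · filter_upwards [hU] with q hq using hfg.tendsto_at hq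

lemma norm_sub_sub_fderiv_le {f : E → F} {c : E} {R C : ℝ}
    (hf : DifferentiableOn ℂ f (ball c R)) (hC : ∀ x ∈ ball c R, ‖f x‖ ≤ C) {z : E}
    (hz : z ∈ ball c R) :
    ‖f z - f c - fderiv ℂ f c (z - c)‖ ≤ 4 * C * (‖z - c‖ / R) ^ 2 := by
  have hR : 0 < R := nonempty_ball.1 ⟨z, hz⟩
  have hfc := (hf.differentiableAt (ball_mem_nhds c hR)).hasFDerivAt
  set h : E → F := fun w => f w - f c - fderiv ℂ f c (w - c) with hh
  have hhc : h c = 0 := by simp [hh]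
  have hmaps : MapsTo h (ball c R) (closedBall (h c) (4 * C)) := fun w hw => by
    have hw' : ‖w - c‖ ≤ R := (mem_ball_iff_norm.1 hw).le
    have hlin : ‖fderiv ℂ f c (w - c)‖ ≤ 2 * C := calc
      _ ≤ 2 * C / R * R := (ContinuousLinearMap.le_opNorm _ _).trans <| by
        have := norm_fderiv_le_of_forall_norm_le hR hf hC
        gcongr
        exact (norm_nonneg _).trans this
      _ = 2 * C := by field_simp
    rw [hhc, mem_closedBall_zero_iff]
    calc ‖h w‖ ≤ ‖f w‖ + ‖f c‖ + ‖fderiv ℂ f c (w - c)‖ :=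
          (norm_sub_le _ _).trans (by gcongr; exact norm_sub_le _ _)
      _ ≤ 4 * C := by linarith [hC w hw, hC c (mem_ball_self hR)]
  have hlittle : (h · - h c) =o[𝓝 c] fun w => ‖w - c‖ ^ 1 := by
    simpa only [hhc, sub_zero, pow_one] using hfc.isLittleO.norm_right
  have hd : DifferentiableOn ℂ h (ball c R) := (hf.sub_const _).sub
    ((fderiv ℂ f c).differentiable.differentiableOn.comp
      (differentiableOn_id.sub_const c) (mapsTo_univ _ _))
  simpa only [hhc, sub_zero, dist_eq_norm, Nat.reduceAdd] using
    Complex.dist_le_mul_div_pow_of_mapsTo_ball_of_isLittleO hd hmaps hlittle hz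

lemma tendstoUniformlyOn_inv_smul_sub {f : E → F} {p : E} {ρ C : ℝ} (hρ : 0 < ρ)
    (hf : DifferentiableOn ℂ f (ball p (2 * ρ))) (hC : ∀ x ∈ ball p (2 * ρ), ‖f x‖ ≤ C) (v : E) :
    TendstoUniformlyOn (fun (z : ℂ) q => z⁻¹ • (f (q + z • v) - f q)) (fun q => fderiv ℂ f q v)
      (𝓝[≠] 0) (ball p ρ) := by
  rw [Metric.tendstoUniformlyOn_iff]
  intro ε hε
  have hzv : ∀ᶠ z : ℂ in 𝓝 0, ‖z • v‖ < ρ :=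
    ContinuousAt.eventually_lt (by fun_prop) continuousAt_const (by simpa using hρ)
  have hzC : ∀ᶠ z : ℂ in 𝓝 0, 4 * C * (‖v‖ / ρ) ^ 2 * ‖z‖ < ε :=
    ContinuousAt.eventually_lt (by fun_prop) continuousAt_const (by simpa using hε)
  filter_upwards [nhdsWithin_le_nhds hzv, nhdsWithin_le_nhds hzC, self_mem_nhdsWithin]
    with z hzρ hzε hz q hq
  have hqp : ball q ρ ⊆ ball p (2 * ρ) := ball_subset_ball' (by rw [two_mul]; gcongr; exact hq.le)
  have hrem := norm_sub_sub_fderiv_le (hf.mono hqp) (fun x hx => hC x (hqp hx))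
    (z := q + z • v) (by simpa using hzρ)
  rw [add_sub_cancel_left, map_smul] at hrem
  have hz' : z ≠ 0 := hz
  calc dist (fderiv ℂ f q v) (z⁻¹ • (f (q + z • v) - f q))
      = ‖z‖⁻¹ * ‖f (q + z • v) - f q - z • fderiv ℂ f q v‖ := by
        rw [dist_comm, dist_eq_norm, ← norm_inv, ← norm_smul, smul_sub _ (_ - _),
          inv_smul_smul₀ hz']
    _ ≤ ‖z‖⁻¹ * (4 * C * (‖z • v‖ / ρ) ^ 2) := by gcongr
    _ = 4 * C * (‖v‖ / ρ) ^ 2 * ‖z‖ := by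
        have := norm_ne_zero_iff.2 hz'
        rw [norm_smul]; field_simp
    _ < ε := hzε

lemma exists_mem_nhds_tendstoUniformlyOn_inv_smul_sub {f : E → F} {U : Set E} (hU : IsOpen U)
    (hf : DifferentiableOn ℂ f U) {p : E} (hp : p ∈ U) (v : E) :
    ∃ V ∈ 𝓝 p, (∀ᶠ z : ℂ in 𝓝[≠] 0, DifferentiableOn ℂ (fun q => z⁻¹ • (f (q + z • v) - f q)) V) ∧
      TendstoUniformlyOn (fun (z : ℂ) q => z⁻¹ • (f (q + z • v) - f q))
        (fun q => fderiv ℂ f q v) (𝓝[≠] 0) V := by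
  have hbdd : ∀ᶠ q in 𝓝 p, q ∈ U ∧ ‖f q‖ ≤ ‖f p‖ + 1 := (hU.eventually_mem hp).and <|
    (hf.continuousOn.continuousAt (hU.mem_nhds hp)).norm.eventually_le_const (lt_add_one _)
  obtain ⟨r, hr, hball⟩ := Metric.eventually_nhds_iff_ball.1 hbdd
  obtain ⟨ρ, rfl⟩ : ∃ ρ, r = 2 * ρ := ⟨r / 2, by ring⟩
  have hρ : 0 < ρ := by linarith
  have hfr : DifferentiableOn ℂ f (ball p (2 * ρ)) := hf.mono fun q hq => (hball q hq).1
  refine ⟨ball p ρ, ball_mem_nhds p hρ, ?_,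
    tendstoUniformlyOn_inv_smul_sub hρ hfr (fun q hq => (hball q hq).2) v⟩
  have hzv : ∀ᶠ z : ℂ in 𝓝 0, ‖z • v‖ < ρ :=
    ContinuousAt.eventually_lt (by fun_prop) continuousAt_const (by simpa using hρ)
  filter_upwards [nhdsWithin_le_nhds hzv] with z hz
  have hmaps : MapsTo (fun q => q + z • v) (ball p ρ) (ball p (2 * ρ)) := fun q hq => by
    rw [mem_ball_iff_norm, add_sub_right_comm, two_mul]
    exact (norm_add_le _ _).trans_lt (add_lt_add (mem_ball_iff_norm.1 hq) hz)
  exact ((hfr.comp (differentiableOn_id.add_const _) hmaps).sub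
    (hfr.mono (ball_subset_ball (by linarith)))).const_smul z⁻¹

variable [CompleteSpace F]

theorem differentiableOn_fderiv_apply {f : E → F} {U : Set E} (hU : IsOpen U)
    (hf : DifferentiableOn ℂ f U) (v : E) : DifferentiableOn ℂ (fun q => fderiv ℂ f q v) U := by
  intro p hp
  obtain ⟨V, hV, hd, hlim⟩ := exists_mem_nhds_tendstoUniformlyOn_inv_smul_sub hU hf hp v
  obtain ⟨L, hL, -⟩ := exists_hasFDerivAt_of_tendstoUniformlyOn hV hd hlim
  exact hL.differentiableAt.differentiableWithinAt

theorem fderiv_fderiv_apply_comm {f : E → F} {U : Set E} (hU : IsOpen U)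
    (hf : DifferentiableOn ℂ f U) {p : E} (hp : p ∈ U) (v w : E) :
    fderiv ℂ (fun q => fderiv ℂ f q w) p v = fderiv ℂ (fun q => fderiv ℂ f q v) p w := by
  obtain ⟨V, hV, hd, hlim⟩ := exists_mem_nhds_tendstoUniformlyOn_inv_smul_sub hU hf hp v
  obtain ⟨L, hL, htend⟩ := exists_hasFDerivAt_of_tendstoUniformlyOn hV hd hlim
  rw [hL.fderiv]
  have hw := ((differentiableOn_fderiv_apply hU hf w).differentiableAt (hU.mem_nhds hp)).hasFDerivAt
  have hslope : Tendsto (fun z : ℂ => z⁻¹ • (fderiv ℂ f (p + z • v) w - fderiv ℂ f p w)) (𝓝[≠] 0)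
      (𝓝 (fderiv ℂ (fun q => fderiv ℂ f q w) p v)) :=
    hw.hasLineDerivAt v |>.tendsto_slope_zero
  refine tendsto_nhds_unique hslope (((ContinuousLinearMap.apply ℂ F w).continuous.tendsto L).comp
    htend |>.congr' ?_)
  have hpU : ∀ᶠ z : ℂ in 𝓝 0, p + z • v ∈ U :=
    ContinuousAt.eventually_mem (by fun_prop) (hU.mem_nhds (by simpa using hp))
  filter_upwards [nhdsWithin_le_nhds hpU] with z hz
  have hfp := hf.differentiableAt (hU.mem_nhds hp)
  have hfz := (differentiableAt_comp_add_right _).2 (hf.differentiableAt (hU.mem_nhds hz))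
  rw [Function.comp_apply, fderiv_fun_const_smul (hfz.fun_sub hfp), fderiv_fun_sub hfz hfp,
    fderiv_comp_add_right]
  rfl

end Analysis

namespace Deformation

open Polynomial Set TopologicalSpace

section Wedge

variable {K H : Type*} [CommRing K] [CommRing H] [Algebra K H]

/-- The extension of a derivation of `H` to `H[X]` that treats `X` as a constant. -/
noncomputable def coeffwise (d : Derivation K H H) : Derivation K H[X] H[X] :=
  PolynomialModule.equivPolynomialSelf.compDer d.mapCoeffs

@[simp]
lemma coeff_coeffwise (d : Derivation K H H) (p : H[X]) (n : ℕ) :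
    (coeffwise d p).coeff n = d (p.coeff n) := rfl

@[simp]
lemma coeffwise_C (d : Derivation K H H) (a : H) : coeffwise d (C a) = C (d a) := by
  ext n
  rw [coeff_coeffwise, coeff_C, coeff_C, apply_ite d, map_zero]

@[simp]
lemma coeffwise_X (d : Derivation K H H) : coeffwise d (X : H[X]) = 0 := by
  ext n
  rw [coeff_coeffwise, coeff_X, apply_ite d, map_zero, d.map_one_eq_zero, ite_self, coeff_zero]

lemma coeffwise_X_pow_mul (d : Derivation K H H) (n : ℕ) (p : H[X]) :
    coeffwise d (X ^ n * p) = X ^ n * coeffwise d p := by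
  simp [Derivation.leibniz_pow]

lemma coeffwise_derivative (d : Derivation K H H) (p : H[X]) :
    coeffwise d (derivative p) = derivative (coeffwise d p) := by
  ext n
  simp only [coeff_coeffwise, coeff_derivative, Derivation.leibniz, map_add,
    Derivation.map_natCast, Derivation.map_one_eq_zero, add_zero, smul_eq_mul, mul_zero, zero_add]
  ring

lemma coeffwise_comm {d e : Derivation K H H} (hde : ∀ f, d (e f) = e (d f)) (p : H[X]) :
    coeffwise d (coeffwise e p) = coeffwise e (coeffwise d p) := by
  ext n
  simp only [coeff_coeffwise, hde]

lemma eval_coeffwise (d : Derivation K H H) (p : H[X]) (c : K) :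
    (coeffwise d p).eval (algebraMap K H c) = d (p.eval (algebraMap K H c)) := by
  induction p using Polynomial.induction_on' with
  | add p q hp hq => simp [hp, hq]
  | monomial n a =>
    rw [← C_mul_X_pow_eq_monomial]
    simp only [Derivation.leibniz, Derivation.leibniz_pow, coeffwise_X, coeffwise_C, smul_eq_mul,
      mul_zero, nsmul_zero, zero_add, eval_mul, eval_pow, eval_X, eval_C, Derivation.map_algebraMap]

lemma X_pow_dvd_coeffwise (d : Derivation K H H) {n : ℕ} {p : H[X]} (h : X ^ n ∣ p) :
    X ^ n ∣ coeffwise d p := by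
  obtain ⟨q, rfl⟩ := h
  exact ⟨_, coeffwise_X_pow_mul d n q⟩

lemma X_pow_dvd_derivative {n : ℕ} {p : H[X]} (h : X ^ (n + 1) ∣ p) : X ^ n ∣ derivative p := by
  rw [X_pow_dvd_iff] at h ⊢
  intro i hi
  rw [coeff_derivative, h _ (Nat.succ_lt_succ hi), zero_mul]

/-- The coefficient `⟨Ω ∧ dΩ⟩` of the form `Ω = A dx + B dy + C dX`, where `d` and `e` stand for
`∂/∂x` and `∂/∂y` on the coefficient ring. -/
noncomputable def wedge (d e : Derivation K H H) (A B C : H[X]) : H[X] :=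
  A * (coeffwise e C - derivative B) + B * (derivative A - coeffwise d C) +
    C * (coeffwise d B - coeffwise e A)

lemma wedge_mul_left (d e : Derivation K H H) (u A B C : H[X]) :
    wedge d e (u * A) (u * B) (u * C) = u ^ 2 * wedge d e A B C := by
  simp only [wedge, Derivation.leibniz, smul_eq_mul, derivative_mul]
  ring

lemma wedge_add_right (d e : Derivation K H H) (A B C s : H[X]) :
    wedge d e A B (C + s) = wedge d e A B C +
      (A * coeffwise e s - B * coeffwise d s + s * (coeffwise d B - coeffwise e A)) := by
  simp only [wedge, map_add]
  ring

lemma X_pow_dvd_wedge_sub (d e : Derivation K H H) {k : ℕ} {A A' B B' C C' : H[X]}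
    (hA : X ^ (k + 1) ∣ A - A') (hB : X ^ (k + 1) ∣ B - B') (hC : X ^ k ∣ C - C') :
    X ^ k ∣ wedge d e A B C - wedge d e A' B' C' := by
  have mod_k {p : H[X]} (h : X ^ (k + 1) ∣ p) : X ^ k ∣ p := (pow_dvd_pow X k.le_succ).trans h
  have curl {p p' q q' : H[X]} (h : X ^ k ∣ p - p') (h' : X ^ k ∣ q - q') :
      X ^ k ∣ (p - q) - (p' - q') := by
    rw [sub_sub_sub_comm]; exact dvd_sub h h'
  have coeffwise_sub (f : Derivation K H H) {p p' : H[X]} (h : X ^ k ∣ p - p') :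
      X ^ k ∣ coeffwise f p - coeffwise f p' := by
    rw [← map_sub]; exact X_pow_dvd_coeffwise f h
  have derivative_sub {p p' : H[X]} (h : X ^ (k + 1) ∣ p - p') :
      X ^ k ∣ derivative p - derivative p' := by
    rw [← map_sub]; exact X_pow_dvd_derivative h
  rw [wedge, wedge, add_sub_add_comm, add_sub_add_comm]
  refine dvd_add (dvd_add (dvd_mul_sub_mul (mod_k hA) ?_) (dvd_mul_sub_mul (mod_k hB) ?_))
    (dvd_mul_sub_mul hC ?_)
  · exact curl (coeffwise_sub e hC) (derivative_sub hB)
  · exact curl (derivative_sub hA) (coeffwise_sub d hC)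
  · exact curl (coeffwise_sub d (mod_k hB)) (coeffwise_sub e (mod_k hA))

variable {d e : Derivation K H H}

lemma wedge_exact (hde : ∀ f, d (e f) = e (d f)) (N : H[X]) :
    wedge d e (coeffwise d N) (coeffwise e N) (derivative N) = 0 := by
  simp only [wedge, coeffwise_derivative, coeffwise_comm hde]
  ring

lemma wedge_exact_add (hde : ∀ f, d (e f) = e (d f)) (N α β : H[X]) (m : ℕ) :
    ∃ T, wedge d e (coeffwise d N + X ^ (m + 1) * α) (coeffwise e N + X ^ (m + 1) * β)
        (derivative N) =
      X ^ m * (((m : H[X]) + 1) * (coeffwise e N * α - coeffwise d N * β) + X * T) := by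
  refine ⟨coeffwise e N * derivative α - coeffwise d N * derivative β
    + X ^ (m + 1) * (β * derivative α - α * derivative β)
    + derivative N * (coeffwise d β - coeffwise e α), ?_⟩
  simp only [wedge, map_add, coeffwise_X_pow_mul, derivative_mul, derivative_X_pow,
    coeffwise_derivative, coeffwise_comm hde, Nat.add_sub_cancel, Nat.cast_add, Nat.cast_one,
    C_eq_natCast, map_add, map_one]
  ring

lemma coeff_wedge_exact_add (hde : ∀ f, d (e f) = e (d f)) {G : H[X]} (hG : G.coeff 0 = 1)
    (N α β t : H[X]) (m : ℕ) :
    (wedge d e (G * (coeffwise d N + X ^ (m + 1) * α)) (G * (coeffwise e N + X ^ (m + 1) * β))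
        (G * derivative N + X ^ m * t)).coeff m =
      d (N.coeff 0) * e (t.coeff 0) - e (N.coeff 0) * d (t.coeff 0) -
        (m + 1) * (d (N.coeff 0) * β.coeff 0 - e (N.coeff 0) * α.coeff 0) := by
  obtain ⟨T, hT⟩ := wedge_exact_add hde N α β m
  set A := coeffwise d N + X ^ (m + 1) * α with hA
  set B := coeffwise e N + X ^ (m + 1) * β with hB
  have hfactor : wedge d e (G * A) (G * B) (G * derivative N + X ^ m * t) =
      X ^ m * (G ^ 2 * (((m : H[X]) + 1) * (coeffwise e N * α - coeffwise d N * β) + X * T) +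
        (G * A * coeffwise e t - G * B * coeffwise d t +
          t * (coeffwise d (G * B) - coeffwise e (G * A)))) := by
    rw [wedge_add_right, wedge_mul_left, hT, coeffwise_X_pow_mul, coeffwise_X_pow_mul]
    ring
  have hA0 : A.coeff 0 = d (N.coeff 0) := by simp [hA, mul_coeff_zero]
  have hB0 : B.coeff 0 = e (N.coeff 0) := by simp [hB, mul_coeff_zero]
  rw [hfactor, coeff_X_pow_mul', if_pos le_rfl, Nat.sub_self]
  simp only [pow_two, coeff_add, coeff_sub, mul_coeff_zero, coeff_natCast_ite, ↓reduceIte,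
    coeff_one_zero, coeff_X_zero, coeff_coeffwise, hG, hA0, hB0, hde, mul_one, one_mul, mul_zero,
    zero_mul, add_zero, sub_self]
  ring

end Wedge

section FormalDeformation

variable {K H : Type*} [CommRing K] [CommRing H] [Algebra K H] {d e : Derivation K H H}
  {F P Q : H} {k : ℕ}

/-- The component along `d` of the deformed form `dF + Xω`, where `P` is that of `ω`. -/
noncomputable def deform (d : Derivation K H H) (F P : H) : H[X] := C (d F) + X * C P

/-- `M` is an integrating factor and `N` a first integral of the deformation `dF + Xω`,
`ω = (P, Q)`, up to order `k`: `M (dF + Xω) ≡ dN` modulo `X ^ (k + 1)`. -/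
structure IsIntegratingPair (d e : Derivation K H H) (F P Q : H) (k : ℕ) (M N : H[X]) : Prop where
  coeff_zero_factor : M.coeff 0 = 1
  coeff_zero_integral : N.coeff 0 = F
  dvd_fst : X ^ (k + 1) ∣ M * deform d F P - coeffwise d N
  dvd_snd : X ^ (k + 1) ∣ M * deform e F Q - coeffwise e N

/-- `G (dF + Xω) + R dX`, `ω = (P, Q)`, is a Godbillon-Vey form of the deformation up to order
`k`: it is integrable modulo `X ^ k`. -/
structure IsGodbillonVey (d e : Derivation K H H) (F P Q : H) (k : ℕ) (G R : H[X]) : Prop where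
  coeff_zero_factor : G.coeff 0 = 1
  dvd_wedge : X ^ k ∣ wedge d e (G * deform d F P) (G * deform e F Q) R

lemma IsGodbillonVey.congr {G G' R R' : H[X]}
    (h : IsGodbillonVey d e F P Q k G R) (hG : X ^ (k + 1) ∣ G' - G) (hR : X ^ k ∣ R' - R) :
    IsGodbillonVey d e F P Q k G' R' := by
  have hmul (p : H[X]) : X ^ (k + 1) ∣ G' * p - G * p := by
    rw [← sub_mul]; exact hG.mul_right p
  refine ⟨?_, (dvd_iff_dvd_of_dvd_sub
    (X_pow_dvd_wedge_sub d e (hmul _) (hmul _) hR)).2 h.dvd_wedge⟩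
  have := X_pow_dvd_iff.1 hG 0 k.succ_pos
  rwa [coeff_sub, h.coeff_zero_factor, sub_eq_zero] at this

lemma IsIntegratingPair.isGodbillonVey (hde : ∀ f, d (e f) = e (d f)) {M N : H[X]}
    (h : IsIntegratingPair d e F P Q k M N) :
    IsGodbillonVey d e F P Q k M (derivative N) := by
  refine ⟨h.coeff_zero_factor, ?_⟩
  have := X_pow_dvd_wedge_sub d e h.dvd_fst h.dvd_snd (C := derivative N) (C' := derivative N)
    (by simp)
  rwa [wedge_exact hde, sub_zero] at this

lemma X_pow_dvd_correction {g r : H} {m : ℕ} {M N α : H[X]}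
    (h : M * deform d F P - coeffwise d N = X ^ (m + 1) * α)
    (hα : α.coeff 0 = g * d F + d r) :
    X ^ (m + 2) ∣
      (M - X ^ (m + 1) * C g) * deform d F P - coeffwise d (N + X ^ (m + 1) * C r) := by
  have hX : X ∣ α - C g * deform d F P - C (d r) := by
    simp [X_dvd_iff, deform, hα, mul_coeff_zero]
  obtain ⟨q, hq⟩ := hX
  refine ⟨q, ?_⟩
  rw [map_add, coeffwise_X_pow_mul, coeffwise_C]
  linear_combination h + X ^ (m + 1) * hq

/-- The de Rham division property of the pair `(u, w)`: every pair proportional to it, in the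
sense that `(u, w) ∧ (a, b) = 0`, is a multiple of it. -/
def HasDivision (u w : H) : Prop :=
  ∀ a b : H, u * b = w * a → ∃ h, a = h * u ∧ b = h * w

/-- A Françoise sequence `(g i, r i)`, `1 ≤ i ≤ k`, of the deformation `dF + Xω`, `ω = (P, Q)`:
`g 0 = 1` and `g i ω = g (i + 1) dF + d (r (i + 1))` for `i < k`. -/
structure IsFrancoiseSeq (d e : Derivation K H H) (F P Q : H) (k : ℕ) (g r : ℕ → H) : Prop where
  zero : g 0 = 1
  fst : ∀ i < k, g i * P = g (i + 1) * d F + d (r (i + 1))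
  snd : ∀ i < k, g i * Q = g (i + 1) * e F + e (r (i + 1))

lemma X_pow_dvd_mul_deform_sub_iff (d : Derivation K H H) (P : H) (k : ℕ) {M N : H[X]}
    (hM : M.coeff 0 = 1) :
    X ^ (k + 1) ∣ M * deform d (N.coeff 0) P - coeffwise d N ↔
      ∀ i < k, M.coeff (i + 1) * d (N.coeff 0) + M.coeff i * P = d (N.coeff (i + 1)) := by
  have hcoeff (i : ℕ) : (M * deform d (N.coeff 0) P - coeffwise d N).coeff (i + 1) =
      M.coeff (i + 1) * d (N.coeff 0) + M.coeff i * P - d (N.coeff (i + 1)) := by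
    simp [deform, mul_add, ← mul_assoc]
  rw [X_pow_dvd_iff]
  refine ⟨fun h i hi => sub_eq_zero.1 ((hcoeff i).symm.trans (h _ (by lia))), fun h n hn => ?_⟩
  cases n with
  | zero => simp [deform, hM, mul_coeff_zero]
  | succ i => rw [hcoeff, h i (by lia), sub_self]

theorem exists_isFrancoiseSeq_iff :
    (∃ g r, IsFrancoiseSeq d e F P Q k g r) ↔ ∃ M N, IsIntegratingPair d e F P Q k M N := by
  constructor
  · rintro ⟨g, r, h⟩
    set M : H[X] := PowerSeries.trunc (k + 1) (PowerSeries.mk fun i => (-1 : K) ^ i • g i) with hM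
    set N : H[X] := C F + X * PowerSeries.trunc k (PowerSeries.mk fun i => (-1 : K) ^ i • r (i + 1))
      with hN
    have hM0 : M.coeff 0 = 1 := by simp [hM, PowerSeries.coeff_trunc, h.zero]
    have hN0 : N.coeff 0 = F := by simp [hN, mul_coeff_zero]
    refine ⟨M, N, hM0, hN0, ?_, ?_⟩
    · rw [← hN0, X_pow_dvd_mul_deform_sub_iff d P k hM0, hN0]
      intro i hi
      have hi' : i < k + 1 := by lia
      simp [hM, hN, PowerSeries.coeff_trunc, hi, hi', h.fst i hi, -Derivation.leibniz, pow_succ]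
    · rw [← hN0, X_pow_dvd_mul_deform_sub_iff e Q k hM0, hN0]
      intro i hi
      have hi' : i < k + 1 := by lia
      simp [hM, hN, PowerSeries.coeff_trunc, hi, hi', h.snd i hi, -Derivation.leibniz, pow_succ]
  · rintro ⟨M, N, h⟩
    have hfst := h.dvd_fst
    have hsnd := h.dvd_snd
    rw [← h.coeff_zero_integral, X_pow_dvd_mul_deform_sub_iff _ _ _ h.coeff_zero_factor,
      h.coeff_zero_integral] at hfst hsnd
    refine ⟨fun i => (-1 : K) ^ i • M.coeff i, fun i => -((-1 : K) ^ i • N.coeff i),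
      by simp [h.coeff_zero_factor], fun i hi => ?_, fun i hi => ?_⟩
    · simp [pow_succ, ← hfst i hi, -Derivation.leibniz]
    · simp [pow_succ, ← hsnd i hi, -Derivation.leibniz]

/-- The factor `G = 1 + Σ X ^ i G i` of a Godbillon-Vey form. -/
noncomputable def gvFactor (k : ℕ) (G : ℕ → H) : H[X] :=
  1 + ∑ i ∈ Finset.Icc 1 k, C (G i) * X ^ i

/-- The `dX` component `Σ X ^ (i - 1) R i` of a Godbillon-Vey form. -/
noncomputable def gvRemainder (k : ℕ) (R : ℕ → H) : H[X] :=
  ∑ i ∈ Finset.Icc 1 k, C (R i) * X ^ (i - 1)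

lemma coeff_zero_gvFactor (k : ℕ) (G : ℕ → H) : (gvFactor k G).coeff 0 = 1 := by
  simp [gvFactor]

lemma X_pow_dvd_gvFactor_sub (k : ℕ) {G : H[X]} (hG : G.coeff 0 = 1) :
    X ^ (k + 1) ∣ gvFactor k G.coeff - G := by
  rw [X_pow_dvd_iff]
  intro n hn
  cases n with
  | zero => simp [coeff_zero_gvFactor, hG]
  | succ n =>
    have hn' : n + 1 ∈ Finset.Icc 1 k := Finset.mem_Icc.2 ⟨by lia, by lia⟩
    simp only [gvFactor, coeff_sub, coeff_add, coeff_one, finsetSum_coeff, coeff_C_mul_X_pow,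
      Finset.sum_ite_eq, hn', if_true]
    simp

lemma X_pow_dvd_gvRemainder_sub (k : ℕ) (R : H[X]) :
    X ^ k ∣ gvRemainder k (fun i => R.coeff (i - 1)) - R := by
  rw [X_pow_dvd_iff]
  intro n hn
  rw [coeff_sub, gvRemainder, finsetSum_coeff, Finset.sum_eq_single (n + 1)]
  · simp
  · intro i hi hne
    rw [coeff_C_mul_X_pow, if_neg (by grind)]
  · grind

end FormalDeformation

section CharZero

variable {K H : Type*} [Field K] [CharZero K] [CommRing H] [Algebra K H] {d e : Derivation K H H}
  {F P Q : H} {k m : ℕ} {G R M N : H[X]}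

lemma IsIntegratingPair.exists_next (hde : ∀ f, d (e f) = e (d f))
    (hdiv : HasDivision (d F) (e F)) (hGV : IsGodbillonVey d e F P Q k G R) (hm : m < k)
    (h : IsIntegratingPair d e F P Q m M N) {α β t : H[X]}
    (hα : M * deform d F P - coeffwise d N = X ^ (m + 1) * α)
    (hβ : M * deform e F Q - coeffwise e N = X ^ (m + 1) * β)
    (ht : M * R - G * derivative N = X ^ m * t) :
    ∃ g r : H, t.coeff 0 = (m + 1) * r ∧
      α.coeff 0 = g * d F + d r ∧ β.coeff 0 = g * e F + e r := by
  have hunit : IsUnit ((m : H) + 1) := by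
    simpa using (Nat.cast_add_one_ne_zero (R := K) m).isUnit.map (algebraMap K H)
  obtain ⟨r, hr⟩ : ∃ r, t.coeff 0 = (m + 1) * r := hunit.dvd
  have hA : G * (coeffwise d N + X ^ (m + 1) * α) = M * (G * deform d F P) := by
    linear_combination -G * hα
  have hB : G * (coeffwise e N + X ^ (m + 1) * β) = M * (G * deform e F Q) := by
    linear_combination -G * hβ
  have hC : G * derivative N + X ^ m * t = M * R := by linear_combination -ht
  have hcoeff := coeff_wedge_exact_add hde hGV.coeff_zero_factor N α β t m
  rw [hA, hB, hC, wedge_mul_left, X_pow_dvd_iff.1 (hGV.dvd_wedge.mul_left _) m hm,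
    h.coeff_zero_integral, hr] at hcoeff
  have hproportional : d F * (β.coeff 0 - e r) = e F * (α.coeff 0 - d r) := by
    refine hunit.mul_left_cancel ?_
    simp only [Derivation.leibniz, map_add, Derivation.map_natCast, Derivation.map_one_eq_zero,
      smul_eq_mul] at hcoeff
    linear_combination hcoeff
  obtain ⟨g, hgd, hge⟩ := hdiv _ _ hproportional
  exact ⟨g, r, hr, sub_eq_iff_eq_add.1 hgd, sub_eq_iff_eq_add.1 hge⟩

lemma IsIntegratingPair.exists_succ (hde : ∀ f, d (e f) = e (d f))
    (hdiv : HasDivision (d F) (e F)) (hGV : IsGodbillonVey d e F P Q k G R) (hm : m < k)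
    (h : IsIntegratingPair d e F P Q m M N) (hR : X ^ m ∣ M * R - G * derivative N) :
    ∃ M' N', IsIntegratingPair d e F P Q (m + 1) M' N' ∧
      X ^ (m + 1) ∣ M' * R - G * derivative N' := by
  obtain ⟨α, hα⟩ := h.dvd_fst
  obtain ⟨β, hβ⟩ := h.dvd_snd
  obtain ⟨t, ht⟩ := hR
  obtain ⟨g, r, htr, hαg, hβg⟩ := h.exists_next hde hdiv hGV hm hα hβ ht
  refine ⟨M - X ^ (m + 1) * C g, N + X ^ (m + 1) * C r,
    ⟨?_, ?_, ?_, ?_⟩, ?_⟩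
  · simp [h.coeff_zero_factor, mul_coeff_zero]
  · simp [h.coeff_zero_integral, mul_coeff_zero]
  · exact X_pow_dvd_correction hα hαg
  · exact X_pow_dvd_correction hβ hβg
  · have hX : X ∣ t - X * C g * R - G * C ((m + 1) * r) := by
      simp [X_dvd_iff, htr, hGV.coeff_zero_factor, mul_coeff_zero]
    obtain ⟨q, hq⟩ := hX
    refine ⟨q, ?_⟩
    simp only [derivative_add, derivative_mul, derivative_X_pow, derivative_C, C_mul, C_add,
      Nat.add_sub_cancel, Nat.cast_add, Nat.cast_one] at hq ⊢
    linear_combination ht + X ^ m * hq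

theorem exists_isIntegratingPair_iff (hde : ∀ f, d (e f) = e (d f))
    (hdiv : HasDivision (d F) (e F)) :
    (∃ M N, IsIntegratingPair d e F P Q k M N) ↔ ∃ G R, IsGodbillonVey d e F P Q k G R := by
  refine ⟨fun ⟨M, N, h⟩ => ⟨M, _, h.isGodbillonVey hde⟩, fun ⟨G, R, hGV⟩ => ?_⟩
  have hind : ∀ m ≤ k, ∃ M N, IsIntegratingPair d e F P Q m M N ∧
      X ^ m ∣ M * R - G * derivative N := by
    intro m
    induction m with
    | zero =>
      exact fun _ => ⟨1, C F, ⟨by simp, by simp, by simp [deform], by simp [deform]⟩, by simp⟩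
    | succ m ih =>
      intro hm
      obtain ⟨M, N, h, hR⟩ := ih (by lia)
      exact h.exists_succ hde hdiv hGV hm hR
  obtain ⟨M, N, h, -⟩ := hind k le_rfl
  exact ⟨M, N, h⟩

theorem exists_isFrancoiseSeq_iff_exists_isGodbillonVey (hde : ∀ f, d (e f) = e (d f))
    (hdiv : HasDivision (d F) (e F)) :
    (∃ g r, IsFrancoiseSeq d e F P Q k g r) ↔
      ∃ G R, IsGodbillonVey d e F P Q k (gvFactor k G) (gvRemainder k R) := by
  rw [exists_isFrancoiseSeq_iff, exists_isIntegratingPair_iff hde hdiv]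
  refine ⟨fun ⟨G, R, h⟩ => ⟨G.coeff, fun i => R.coeff (i - 1), ?_⟩, fun ⟨G, R, h⟩ => ⟨_, _, h⟩⟩
  exact h.congr (X_pow_dvd_gvFactor_sub k h.coeff_zero_factor) (X_pow_dvd_gvRemainder_sub k R)

end CharZero

section Holomorphic

variable {E : Type*} [NormedAddCommGroup E] {U : Opens E}

/-- Extension of a function on `U` to the whole space. The constant value `1` off `U` makes the
extension of the constant function `1` equal to `1` everywhere. -/
noncomputable def extendOne (f : U → ℂ) : E → ℂ := Function.extend Subtype.val f 1

lemma extendOne_apply (f : U → ℂ) (p : U) : extendOne f p = f p :=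
  Subtype.val_injective.extend_apply f 1 p

lemma extendOne_one (p : E) : extendOne (1 : U → ℂ) p = 1 := by
  classical
  rw [extendOne, Function.extend_def]
  split_ifs <;> rfl

lemma eqOn_extendOne {f : U → ℂ} {φ : E → ℂ} (h : ∀ p : U, f p = φ p) :
    EqOn (extendOne f) φ U := fun p hp => (extendOne_apply f ⟨p, hp⟩).trans (h ⟨p, hp⟩)

variable [NormedSpace ℂ E]

lemma fderiv_extendOne {f : U → ℂ} {φ : E → ℂ} (h : ∀ p : U, f p = φ p) (p : U) :
    fderiv ℂ (extendOne f) p = fderiv ℂ φ p :=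
  ((eqOn_extendOne h).eventuallyEq_of_mem (U.isOpen.mem_nhds p.2)).fderiv_eq

/-- The functions holomorphic on `U`, as a subalgebra of the functions on `U`. -/
def holSubalgebra (U : Opens E) : Subalgebra ℂ (U → ℂ) where
  carrier := {f | DifferentiableOn ℂ (extendOne f) U}
  mul_mem' {f g} hf hg := (DifferentiableOn.mul hf hg).congr
    (eqOn_extendOne fun p => by simp [extendOne_apply])
  add_mem' {f g} hf hg := (DifferentiableOn.add hf hg).congr
    (eqOn_extendOne fun p => by simp [extendOne_apply])
  algebraMap_mem' c := (differentiableOn_const c).congr (eqOn_extendOne fun _ => rfl)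

/-- The algebra of holomorphic functions on `U`. Its elements are functions on the subtype, so that
equality in the algebra is equality on `U`. -/
def Hol (U : Opens E) : Type _ := holSubalgebra U

namespace Hol

instance : CommRing (Hol U) := inferInstanceAs (CommRing (holSubalgebra U))

instance : Algebra ℂ (Hol U) := inferInstanceAs (Algebra ℂ (holSubalgebra U))

instance : FunLike (Hol U) U ℂ where
  coe := Subtype.val
  coe_injective := Subtype.val_injective

/-- The element of `Hol U` given by a function on `U` with holomorphic extension. -/
def mk (f : U → ℂ) (hf : DifferentiableOn ℂ (extendOne f) U) : Hol U := ⟨f, hf⟩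

@[simp]
lemma mk_apply (f : U → ℂ) (hf : DifferentiableOn ℂ (extendOne f) U) (p : U) :
    mk f hf p = f p := rfl

@[simp]
lemma add_apply (f g : Hol U) (p : U) : (f + g) p = f p + g p := rfl

@[simp]
lemma mul_apply (f g : Hol U) (p : U) : (f * g) p = f p * g p := rfl

@[simp]
lemma smul_apply (c : ℂ) (f : Hol U) (p : U) : (c • f) p = c * f p := rfl

lemma differentiableOn (f : Hol U) : DifferentiableOn ℂ (extendOne f) U := Subtype.prop f

lemma differentiableAt (f : Hol U) (p : U) : DifferentiableAt ℂ (extendOne f) p :=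
  f.differentiableOn.differentiableAt (U.isOpen.mem_nhds p.2)

/-- Evaluation at a point of `U`. -/
def pointEval (p : U) : Hol U →ₐ[ℂ] ℂ :=
  (Pi.evalAlgHom ℂ (fun _ : U => ℂ) p).comp (holSubalgebra U).val

lemma pointEval_apply (p : U) (f : Hol U) : pointEval p f = f p := rfl

open Classical in
/-- The restriction to `U` of a function holomorphic on `U`, and `0` for any other function. -/
noncomputable def ofFun (U : Opens E) (φ : E → ℂ) : Hol U :=
  if hφ : DifferentiableOn ℂ φ U then
    mk (fun p => φ p) (hφ.congr (eqOn_extendOne fun _ => rfl))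
  else 0

lemma ofFun_apply {φ : E → ℂ} (hφ : DifferentiableOn ℂ φ U) (p : U) : ofFun U φ p = φ p := by
  rw [ofFun, dif_pos hφ, mk_apply]

/-- The derivative in the direction `v`, as a derivation of the algebra of holomorphic functions. -/
noncomputable def dirDeriv (v : E) : Derivation ℂ (Hol U) (Hol U) :=
  Derivation.mk'
    { toFun := fun f => mk (fun p => fderiv ℂ (extendOne f) p v)
        ((differentiableOn_fderiv_apply U.isOpen f.differentiableOn v).congr
          (eqOn_extendOne fun _ => rfl))
      map_add' := fun f g => DFunLike.ext _ _ fun p => by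
        rw [mk_apply, fderiv_extendOne (φ := extendOne f + extendOne g) (by simp [extendOne_apply]),
          fderiv_add (f.differentiableAt p) (g.differentiableAt p)]
        rfl
      map_smul' := fun c f => DFunLike.ext _ _ fun p => by
        rw [mk_apply, fderiv_extendOne (φ := c • extendOne f) (by simp [extendOne_apply]),
          fderiv_const_smul (f.differentiableAt p)]
        rfl }
    fun f g => DFunLike.ext _ _ fun p => by
      change fderiv ℂ (extendOne (f * g)) p v =
        f p * fderiv ℂ (extendOne g) p v + g p * fderiv ℂ (extendOne f) p v
      rw [fderiv_extendOne (φ := extendOne f * extendOne g) (by simp [extendOne_apply]),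
        fderiv_mul (f.differentiableAt p) (g.differentiableAt p)]
      simp [extendOne_apply]

lemma dirDeriv_apply (v : E) {f : Hol U} {φ : E → ℂ} (h : ∀ p : U, f p = φ p) (p : U) :
    dirDeriv v f p = fderiv ℂ φ p v :=
  congr($(fderiv_extendOne h p) v)

lemma dirDeriv_comm (v w : E) (f : Hol U) :
    dirDeriv v (dirDeriv w f) = dirDeriv w (dirDeriv v f) := by
  have hderiv (v' : E) (p : U) : dirDeriv v' f p = fderiv ℂ (extendOne f) p v' := rfl
  refine DFunLike.ext _ _ fun p => ?_
  rw [dirDeriv_apply v (φ := fun q => fderiv ℂ (extendOne f) q w) (hderiv w),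
    dirDeriv_apply w (φ := fun q => fderiv ℂ (extendOne f) q v) (hderiv v),
    fderiv_fderiv_apply_comm U.isOpen f.differentiableOn p.2]

theorem hasDivision {u w : Hol U} (huw : ∀ p, u p ≠ 0 ∨ w p ≠ 0) : HasDivision u w := by
  intro a b hab
  have pointwise (p : U) : ∃ c, a p = c * u p ∧ b p = c * w p := by
    have hp : u p * b p = w p * a p := congr($hab p)
    rcases huw p with hu | hw
    · exact ⟨a p / u p, by field_simp, by field_simp; linear_combination hp⟩
    · exact ⟨b p / w p, by field_simp; linear_combination -hp, by field_simp⟩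
  choose h ha hb using pointwise
  have differentiableAt_quotient {a u : Hol U} (ha : ∀ p, a p = h p * u p) (p : U)
      (hu : u p ≠ 0) : DifferentiableAt ℂ (extendOne h) p := by
    rw [← extendOne_apply u] at hu
    refine ((a.differentiableAt p).mul ((u.differentiableAt p).inv hu)).congr_of_eventuallyEq ?_
    filter_upwards [U.isOpen.mem_nhds p.2, (u.differentiableAt p).continuousAt.eventually_ne hu]
      with q hq hu
    rw [Pi.mul_apply, Pi.inv_apply, eq_mul_inv_iff_mul_eq₀ hu, extendOne_apply h ⟨q, hq⟩,
      extendOne_apply u ⟨q, hq⟩, extendOne_apply a ⟨q, hq⟩, ha]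
  refine ⟨mk h fun p hp => DifferentiableAt.differentiableWithinAt ?_,
    DFunLike.ext _ _ ha, DFunLike.ext _ _ hb⟩
  exact (huw ⟨p, hp⟩).elim (differentiableAt_quotient ha ⟨p, hp⟩)
    (differentiableAt_quotient hb ⟨p, hp⟩)

/-- The value at the point `p` of `U` and the parameter `c` of a polynomial with holomorphic
coefficients. -/
noncomputable def evalAt (p : U) (c : ℂ) : (Hol U)[X] →+* ℂ :=
  (evalRingHom c).comp (mapRingHom (pointEval p).toRingHom)

@[simp]
lemma evalAt_C (p : U) (c : ℂ) (f : Hol U) : evalAt p c (C f) = f p := by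
  simp [evalAt, pointEval_apply]

@[simp]
lemma evalAt_X (p : U) (c : ℂ) : evalAt p c X = c := by
  simp [evalAt]

lemma evalAt_eq_eval_apply (p : U) (c : ℂ) (q : (Hol U)[X]) :
    evalAt p c q = q.eval (algebraMap ℂ (Hol U) c) p := by
  rw [← pointEval_apply, ← AlgHom.coe_toRingHom, ← eval₂_at_apply, AlgHom.coe_toRingHom,
    AlgHom.commutes, eval₂_eq_eval_map]
  rfl

lemma fderiv_eq_evalAt {q : (Hol U)[X]} {a : E → ℂ → ℂ} (h : ∀ (p : U) c, a p c = evalAt p c q)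
    (v : E) (p : U) (c : ℂ) :
    fderiv ℂ (fun x => a x c) p v = evalAt p c (coeffwise (dirDeriv v) q) := by
  rw [evalAt_eq_eval_apply, eval_coeffwise]
  exact (dirDeriv_apply v (fun p => by rw [h, evalAt_eq_eval_apply]) p).symm

lemma deriv_evalAt (q : (Hol U)[X]) (p : U) (c : ℂ) :
    deriv (fun ε => evalAt p ε q) c = evalAt p c (derivative q) := by
  simp [evalAt, Polynomial.deriv]

end Hol

end Holomorphic

lemma iteratedDeriv_eval_zero {K : Type*} [NontriviallyNormedField K] (q : K[X]) (n : ℕ) :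
    iteratedDeriv n (fun x => q.eval x) 0 = n.factorial * q.coeff n := by
  have hiterate : deriv^[n] (fun x => q.eval x) = fun x => (derivative^[n] q).eval x := by
    induction n with
    | zero => rfl
    | succ n ih =>
      rw [Function.iterate_succ_apply', ih, Function.iterate_succ_apply']
      exact funext fun x => Polynomial.deriv _
  rw [iteratedDeriv_eq_iterate, hiterate]
  beta_reduce
  rw [← coeff_zero_eq_eval_zero, coeff_iterate_derivative,
    zero_add, Nat.descFactorial_self, nsmul_eq_mul]

section Plane

variable {U : Opens (ℂ × ℂ)} {k : ℕ} {F P Q : ℂ × ℂ → ℂ}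

open Hol

lemma intCoeff_eq_evalAt_wedge {A B C : (Hol U)[X]} {a b c : ℂ × ℂ → ℂ → ℂ}
    (ha : ∀ (p : U) ε, a p ε = evalAt p ε A) (hb : ∀ (p : U) ε, b p ε = evalAt p ε B)
    (hc : ∀ (p : U) ε, c p ε = evalAt p ε C) (p : U) (ε : ℂ) :
    intCoeff a b c p ε = evalAt p ε (wedge (dirDeriv (1, 0)) (dirDeriv (0, 1)) A B C) := by
  simp only [intCoeff, pdx, pdy, wedge, map_add, map_sub, map_mul, fderiv_eq_evalAt ha,
    fderiv_eq_evalAt hb, fderiv_eq_evalAt hc, deriv_evalAt, ha, hb, hc]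

lemma X_pow_dvd_wedge_iff {A B C : (Hol U)[X]} {a b c : ℂ × ℂ → ℂ → ℂ}
    (ha : ∀ (p : U) ε, a p ε = evalAt p ε A) (hb : ∀ (p : U) ε, b p ε = evalAt p ε B)
    (hc : ∀ (p : U) ε, c p ε = evalAt p ε C) :
    X ^ k ∣ wedge (dirDeriv (1, 0)) (dirDeriv (0, 1)) A B C ↔
      ∀ p ∈ U, ∀ n < k, iteratedDeriv n (fun ε => intCoeff a b c p ε) 0 = 0 := by
  have taylor (p : U) (n : ℕ) : iteratedDeriv n (fun ε => intCoeff a b c p ε) 0 =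
      n.factorial * (wedge (dirDeriv (1, 0)) (dirDeriv (0, 1)) A B C).coeff n p := by
    rw [funext (intCoeff_eq_evalAt_wedge ha hb hc p), ← pointEval_apply]
    exact (iteratedDeriv_eval_zero _ n).trans (by rw [coe_mapRingHom, coeff_map]; rfl)
  have hfactorial (n : ℕ) : (n.factorial : ℂ) ≠ 0 := Nat.cast_ne_zero.2 n.factorial_ne_zero
  rw [X_pow_dvd_iff]
  constructor
  · intro h p hp n hn
    rw [taylor ⟨p, hp⟩, h n hn, ← pointEval_apply, map_zero, mul_zero]
  · intro h n hn
    exact DFunLike.ext _ _ fun p =>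
      (mul_eq_zero.1 ((taylor p n).symm.trans (h p p.2 n hn))).resolve_left (hfactorial n)

lemma hasDivision_gradient (hF : DifferentiableOn ℂ F U)
    (hdF : ∀ p ∈ U, (pdx F p, pdy F p) ≠ (0, 0)) :
    HasDivision (dirDeriv (1, 0) (ofFun U F)) (dirDeriv (0, 1) (ofFun U F)) := by
  refine Hol.hasDivision fun p => ?_
  rw [dirDeriv_apply _ (ofFun_apply hF), dirDeriv_apply _ (ofFun_apply hF)]
  simpa only [pdx, pdy, ne_eq, Prod.mk.injEq, not_and_or] using hdF p p.2

lemma isFrancoiseSeq_iff (hF : DifferentiableOn ℂ F U) (hP : DifferentiableOn ℂ P U)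
    (hQ : DifferentiableOn ℂ Q U) {g r : ℕ → ℂ × ℂ → ℂ} {g' r' : ℕ → Hol U} (h0 : g' 0 = 1)
    (hg : ∀ i ≤ k, ∀ p : U, g' i p = g i p)
    (hr : ∀ i, 1 ≤ i → i ≤ k → ∀ p : U, r' i p = r i p) :
    IsFrancoiseSeq (dirDeriv (1, 0)) (dirDeriv (0, 1)) (ofFun U F) (ofFun U P)
        (ofFun U Q) k g' r' ↔
      ∀ i, 1 ≤ i → i ≤ k → ∀ p ∈ U,
        g (i - 1) p * P p = g i p * pdx F p + pdx (r i) p ∧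
        g (i - 1) p * Q p = g i p * pdy F p + pdy (r i) p := by
  have component (v : ℂ × ℂ) {S : ℂ × ℂ → ℂ} (hS : DifferentiableOn ℂ S U) {i : ℕ} (hi : i < k) :
      g' i * ofFun U S = g' (i + 1) * dirDeriv v (ofFun U F) + dirDeriv v (r' (i + 1)) ↔
        ∀ p ∈ U, g i p * S p = g (i + 1) p * fderiv ℂ F p v + fderiv ℂ (r (i + 1)) p v := by
    have eval_iff (p : U) : pointEval p (g' i * ofFun U S) =
        pointEval p (g' (i + 1) * dirDeriv v (ofFun U F) + dirDeriv v (r' (i + 1))) ↔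
        g i p * S p = g (i + 1) p * fderiv ℂ F p v + fderiv ℂ (r (i + 1)) p v := by
      simp only [map_mul, map_add, pointEval_apply, hg i hi.le, hg (i + 1) hi, ofFun_apply hS,
        dirDeriv_apply v (ofFun_apply hF), dirDeriv_apply v (hr (i + 1) i.succ_pos hi)]
    exact ⟨fun h p hp => (eval_iff ⟨p, hp⟩).1 (by rw [h]),
      fun h => DFunLike.ext _ _ fun p => (eval_iff p).2 (h p p.2)⟩
  constructor
  · rintro ⟨-, hfst, hsnd⟩ (_ | i) h1 hi p hp
    · lia
    · exact ⟨(component _ hP hi).1 (hfst i hi) p hp, (component _ hQ hi).1 (hsnd i hi) p hp⟩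
  · exact fun h => ⟨h0,
      fun i hi => (component _ hP hi).2 fun p hp => (h (i + 1) i.succ_pos hi p hp).1,
      fun i hi => (component _ hQ hi).2 fun p hp => (h (i + 1) i.succ_pos hi p hp).2⟩

lemma isGodbillonVey_iff (hF : DifferentiableOn ℂ F U) (hP : DifferentiableOn ℂ P U)
    (hQ : DifferentiableOn ℂ Q U) {G R : ℕ → ℂ × ℂ → ℂ} {G' R' : ℕ → Hol U}
    (hG : ∀ i, 1 ≤ i → i ≤ k → ∀ p : U, G' i p = G i p)
    (hR : ∀ i, 1 ≤ i → i ≤ k → ∀ p : U, R' i p = R i p) :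
    IsGodbillonVey (dirDeriv (1, 0)) (dirDeriv (0, 1)) (ofFun U F) (ofFun U P)
        (ofFun U Q) k (gvFactor k G') (gvRemainder k R') ↔
      ∀ p ∈ U, ∀ n < k,
        iteratedDeriv n
          (fun ε : ℂ => intCoeff
            (fun q e => (1 + ∑ i ∈ Finset.Icc 1 k, e ^ i * G i q) * (pdx F q + e * P q))
            (fun q e => (1 + ∑ i ∈ Finset.Icc 1 k, e ^ i * G i q) * (pdy F q + e * Q q))
            (fun q e => ∑ i ∈ Finset.Icc 1 k, e ^ (i - 1) * R i q) p ε) 0 = 0 := by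
  have hfactor (p : U) (ε : ℂ) :
      1 + ∑ i ∈ Finset.Icc 1 k, ε ^ i * G i p = evalAt p ε (gvFactor k G') := by
    simp only [gvFactor, map_add, map_one, map_sum, map_mul, map_pow, evalAt_C, evalAt_X]
    congr 1
    refine Finset.sum_congr rfl fun i hi => ?_
    rw [hG i (Finset.mem_Icc.1 hi).1 (Finset.mem_Icc.1 hi).2, mul_comm]
  have hremainder (p : U) (ε : ℂ) :
      ∑ i ∈ Finset.Icc 1 k, ε ^ (i - 1) * R i p = evalAt p ε (gvRemainder k R') := by
    simp only [gvRemainder, map_sum, map_mul, map_pow, evalAt_C, evalAt_X]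
    refine Finset.sum_congr rfl fun i hi => ?_
    rw [hR i (Finset.mem_Icc.1 hi).1 (Finset.mem_Icc.1 hi).2, mul_comm]
  have hdeform (v : ℂ × ℂ) {S : ℂ × ℂ → ℂ} (hS : DifferentiableOn ℂ S U) (p : U) (ε : ℂ) :
      fderiv ℂ F p v + ε * S p =
        evalAt p ε (deform (dirDeriv v) (ofFun U F) (ofFun U S)) := by
    simp [deform, dirDeriv_apply v (ofFun_apply hF), ofFun_apply hS, mul_comm ε]
  rw [← X_pow_dvd_wedge_iff (fun p ε => by rw [map_mul, hfactor, pdx, hdeform _ hP])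
    (fun p ε => by rw [map_mul, hfactor, pdy, hdeform _ hQ]) hremainder]
  exact ⟨fun h => h.dvd_wedge, fun h => ⟨coeff_zero_gvFactor k G', h⟩⟩

end Plane

end Deformation

/-- Theorem 7 of the paper, both directions combined: for dF + εω with dF nonvanishing,
there exists a Françoise sequence of order k iff there exists a Godbillon-Vey type form
Ω = (G·(∂F/∂x + εP), G·(∂F/∂y + εQ), Σ_{i=1}^k ε^{i−1}R_i), G = 1 + Σ_{i=1}^k ε^i G_i,
solving the integrability equation Ω ∧ dΩ = 0 up to order k (coefficients of ε^n of
⟨Ω ∧ dΩ⟩ vanish identically for n ≤ k−1). -/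
theorem francoise_iff_godbillon_vey
    (U : Set (ℂ × ℂ)) (hU : IsOpen U) (k : ℕ) (hk : 1 ≤ k)
    (F P Q : ℂ × ℂ → ℂ)
    (hF : DifferentiableOn ℂ F U)
    (hdF : ∀ p ∈ U, (pdx F p, pdy F p) ≠ (0, 0))
    (hP : DifferentiableOn ℂ P U) (hQ : DifferentiableOn ℂ Q U) :
    (∃ g r : ℕ → ℂ × ℂ → ℂ,
      (∀ p, g 0 p = 1) ∧
      (∀ i, 1 ≤ i → i ≤ k → DifferentiableOn ℂ (g i) U ∧ DifferentiableOn ℂ (r i) U) ∧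
      (∀ i, 1 ≤ i → i ≤ k → ∀ p ∈ U,
        g (i - 1) p * P p = g i p * pdx F p + pdx (r i) p ∧
        g (i - 1) p * Q p = g i p * pdy F p + pdy (r i) p)) ↔
    (∃ G R : ℕ → ℂ × ℂ → ℂ,
      (∀ i, 1 ≤ i → i ≤ k → DifferentiableOn ℂ (G i) U ∧ DifferentiableOn ℂ (R i) U) ∧
      (∀ p ∈ U, ∀ n < k,
        iteratedDeriv n
          (fun ε : ℂ => intCoeff
            (fun q e => (1 + ∑ i ∈ Finset.Icc 1 k, e ^ i * G i q) * (pdx F q + e * P q))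
            (fun q e => (1 + ∑ i ∈ Finset.Icc 1 k, e ^ i * G i q) * (pdy F q + e * Q q))
            (fun q e => ∑ i ∈ Finset.Icc 1 k, e ^ (i - 1) * R i q) p ε) 0 = 0)) := by
  open Deformation Hol TopologicalSpace in
  let V : Opens (ℂ × ℂ) := ⟨U, hU⟩
  have key := exists_isFrancoiseSeq_iff_exists_isGodbillonVey (P := ofFun V P) (Q := ofFun V Q)
    (k := k) (dirDeriv_comm (1, 0) (0, 1)) (hasDivision_gradient hF hdF)
  constructor
  · rintro ⟨g, r, hg0, hol, heq⟩
    have hg : ∀ i ≤ k, DifferentiableOn ℂ (g i) V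
      | 0, _ => (differentiableOn_const 1).congr fun p _ => hg0 p
      | i + 1, hi => (hol _ i.succ_pos hi).1
    have h0 : ofFun V (g 0) = 1 :=
      DFunLike.ext _ _ fun p => (ofFun_apply (hg 0 k.zero_le) p).trans (hg0 p)
    obtain ⟨G, R, hGR⟩ := key.1 ⟨_, _, (isFrancoiseSeq_iff hF hP hQ h0
      (fun i hi => ofFun_apply (hg i hi)) fun i h1 hi => ofFun_apply (hol i h1 hi).2).2 heq⟩
    exact ⟨_, _, fun i _ _ => ⟨(G i).differentiableOn, (R i).differentiableOn⟩,
      (isGodbillonVey_iff hF hP hQ (fun i _ _ p => (extendOne_apply (G i) p).symm)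
        fun i _ _ p => (extendOne_apply (R i) p).symm).1 hGR⟩
  · rintro ⟨G, R, hol, heq⟩
    obtain ⟨g, r, hgr⟩ := key.2 ⟨_, _, (isGodbillonVey_iff hF hP hQ
      (fun i h1 hi => ofFun_apply (hol i h1 hi).1)
      fun i h1 hi => ofFun_apply (hol i h1 hi).2).2 heq⟩
    exact ⟨_, _, fun p => hgr.zero ▸ extendOne_one p,
      fun i _ _ => ⟨(g i).differentiableOn, (r i).differentiableOn⟩,
      (isFrancoiseSeq_iff hF hP hQ hgr.zero (fun i _ p => (extendOne_apply (g i) p).symm)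
        fun i _ _ p => (extendOne_apply (r i) p).symm).1 hgr⟩
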